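/- For every α* > 0 there exists a unique ω* > 0 such that the solution (ℓ(τ), α(τ)) of ℓ' = −ω*(α² + ℓ²) + (α² + ℓ²)^{3/2} − 2α³ℓ − αℓ³, α' = −α⁴ with initial condition (ℓ(0), α(0)) = (0, α*) exists for all τ ≥ 0 and satisfies ℓ(τ) → ω* as τ → ∞. Moreover ω* is strictly increasing in α*. -/

import Mathlib

open Real Set Filter Topology

noncomputable def spiralL (ω ℓ α : ℝ) : ℝ :=
  -ω * (α ^ 2 + ℓ ^ 2) + (α ^ 2 + ℓ ^ 2) ^ ((3 : ℝ) / 2) - 2 * α ^ 3 * ℓ - α * ℓ ^ 3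

noncomputable def spiralA (α : ℝ) : ℝ := -α ^ 4

/-- The shooting solution with (ℓ(0), α(0)) = (0, α*) and parameter ω exists for all τ ≥ 0
and satisfies ℓ(τ) → ω as τ → ∞. -/
def ShootingConnects (αstar ω : ℝ) : Prop :=
  ∃ ℓ α : ℝ → ℝ,
    ℓ 0 = 0 ∧ α 0 = αstar ∧
    (∀ τ ≥ (0 : ℝ), HasDerivAt ℓ (spiralL ω (ℓ τ) (α τ)) τ) ∧
    (∀ τ ≥ (0 : ℝ), HasDerivAt α (spiralA (α τ)) τ) ∧
    Tendsto ℓ atTop (nhds ω)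


/-! ### Generic ODE lemmas -/

lemma sp_fence {x x' B B' : ℝ → ℝ} {t₀ : ℝ}
    (hx : ∀ t ≥ t₀, HasDerivAt x (x' t) t) (hB : ∀ t ≥ t₀, HasDerivAt B (B' t) t)
    (h0 : x t₀ ≤ B t₀) {T : ℝ} (h : ∀ t ≥ t₀, t < T → x t = B t → x' t < B' t) :
    ∀ t ≥ t₀, t ≤ T → x t ≤ B t := by
  intro t ht htT
  refine image_le_of_deriv_right_lt_deriv_boundary' (f := x) (f' := x') (a := t₀) (b := T)
    (B := B) (B' := B') ?_ ?_ h0 ?_ ?_ ?_ ⟨ht, htT⟩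
  · exact fun s hs => (hx s hs.1).continuousAt.continuousWithinAt
  · exact fun s hs => (hx s hs.1).hasDerivWithinAt
  · exact fun s hs => (hB s hs.1).continuousAt.continuousWithinAt
  · exact fun s hs => (hB s hs.1).hasDerivWithinAt
  · exact fun s hs => h s hs.1 hs.2

lemma sp_nonneg {d d' : ℝ → ℝ} {t₀ T K : ℝ}
    (hd : ∀ t ≥ t₀, HasDerivAt d (d' t) t) (h0 : 0 ≤ d t₀)
    (h : ∀ t ≥ t₀, t ≤ T → d t < 0 → K * d t ≤ d' t) :
    ∀ t ≥ t₀, t ≤ T → 0 ≤ d t := by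
  intro t ht htT
  have key : ∀ ε > 0, -d t ≤ ε * exp ((K + 1) * t) := by
    intro ε hε
    refine sp_fence (x := fun t => -d t) (x' := fun t => -d' t)
      (B := fun t => ε * exp ((K + 1) * t))
      (B' := fun t => ε * (exp ((K + 1) * t) * (K + 1))) (t₀ := t₀) (T := T)
      (fun s hs => (hd s hs).neg) ?_ ?_ ?_ t ht htT
    · intro s _
      have := ((((hasDerivAt_id s).const_mul (K + 1)).exp).const_mul ε)
      simpa using this
    · have : 0 < ε * exp ((K + 1) * t₀) := by positivity
      show -d t₀ ≤ ε * exp ((K + 1) * t₀)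
      linarith
    · intro s hs hsT heq
      have heq : -d s = ε * exp ((K + 1) * s) := heq
      have hp : 0 < ε * exp ((K + 1) * s) := by positivity
      have := h s hs hsT.le (by linarith)
      show - d' s < ε * (exp ((K + 1) * s) * (K + 1))
      have e : ε * (exp ((K + 1) * s) * (K + 1)) = (K + 1) * (-d s) := by rw [heq]; ring
      rw [e]; nlinarith
  by_contra hneg
  push Not at hneg
  have hp := exp_pos ((K + 1) * t)
  have := key (-d t / (2 * exp ((K + 1) * t))) (by apply div_pos <;> linarith)
  rw [div_mul_eq_mul_div, div_eq_mul_inv, mul_inv] at this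
  field_simp at this
  linarith

lemma sp_pos {d d' : ℝ → ℝ} {t₀ T K : ℝ}
    (hd : ∀ t ≥ t₀, HasDerivAt d (d' t) t) (h0 : 0 < d t₀)
    (h : ∀ t ≥ t₀, t ≤ T → 0 < d t → -K * d t ≤ d' t) :
    ∀ t ≥ t₀, t ≤ T → 0 < d t := by
  intro t ht htT
  have := sp_fence (x := fun t => d t₀ * exp (-(K + 1) * (t - t₀))) (B := d) (B' := d')
      (x' := fun t => d t₀ * (exp (-(K + 1) * (t - t₀)) * (-(K + 1)))) (t₀ := t₀) (T := T)
      ?_ hd ?_ ?_ t ht htT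
  · have hp : 0 < d t₀ * exp (-(K + 1) * (t - t₀)) := by positivity
    exact lt_of_lt_of_le hp this
  · intro s _
    have := (((((hasDerivAt_id s).sub_const t₀).const_mul (-(K + 1))).exp).const_mul (d t₀))
    simpa using this
  · simp
  · intro s hs hsT heq
    have heq : d t₀ * exp (-(K + 1) * (s - t₀)) = d s := heq
    have hp : 0 < d t₀ * exp (-(K + 1) * (s - t₀)) := by positivity
    have := h s hs hsT.le (by linarith)
    show d t₀ * (exp (-(K + 1) * (s - t₀)) * (-(K + 1))) < d' s
    have e : d t₀ * (exp (-(K + 1) * (s - t₀)) * (-(K + 1))) = -(K + 1) * d s := by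
      rw [← heq]; ring
    rw [e]; nlinarith

lemma sp_bdd {x x' : ℝ → ℝ} {t₀ : ℝ} (hx : ∀ t ≥ t₀, HasDerivAt x (x' t) t) (T : ℝ) :
    ∃ R, 0 ≤ R ∧ ∀ t ≥ t₀, t ≤ T → |x t| ≤ R := by
  have hc : ContinuousOn x (Icc t₀ T) :=
    fun s hs => (hx s hs.1).continuousAt.continuousWithinAt
  obtain ⟨C, hC⟩ := isCompact_Icc.exists_bound_of_continuousOn hc
  exact ⟨max C 0, le_max_right _ _, fun t h1 h2 => (hC t ⟨h1, h2⟩).trans (le_max_left _ _)⟩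

open scoped NNReal in
lemma sp_global {F : ℝ → ℝ → ℝ} {K C : ℝ≥0} (hL : ∀ t, LipschitzWith K (F t))
    (hc : ∀ x, Continuous (fun t => F t x)) (hb : ∀ t x, |F t x| ≤ C) :
    ∃ x : ℝ → ℝ, x 0 = 0 ∧ ∀ t, HasDerivAt x (F t (x t)) t := by
  have loc : ∀ n : ℕ, ∃ x : ℝ → ℝ, x 0 = 0 ∧
      ∀ t ∈ Ioo (-((n:ℝ)+1)) ((n:ℝ)+1), HasDerivAt x (F t (x t)) t := by
    intro n
    have h0 : (0:ℝ) ∈ Icc (-((n:ℝ)+1)) ((n:ℝ)+1) := ⟨by linarith [n.cast_nonneg (α := ℝ)], by positivity⟩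
    have hpl : IsPicardLindelof F (tmin := -((n:ℝ)+1)) (tmax := (n:ℝ)+1) ⟨0, h0⟩ (0:ℝ)
        (C * (n + 1)) 0 C K := by
      refine ⟨fun t _ => (hL t).lipschitzOnWith, fun x _ => (hc x).continuousOn,
        fun t _ x _ => hb t x, ?_⟩
      simp
    obtain ⟨x, hx0, hx⟩ := hpl.exists_eq_forall_mem_Icc_hasDerivWithinAt₀
    exact ⟨x, hx0, fun t ht => (hx t (Ioo_subset_Icc_self ht)).hasDerivAt (Icc_mem_nhds ht.1 ht.2)⟩
  choose X hX0 hX using loc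
  have agree : ∀ m n : ℕ, m ≤ n → ∀ t ∈ Ioo (-((m:ℝ)+1)) ((m:ℝ)+1), X m t = X n t := by
    intro m n hmn t ht
    have hmn' : (m:ℝ) ≤ n := by exact_mod_cast hmn
    refine ODE_solution_unique_of_mem_Ioo (v := F) (s := fun _ => univ) (K := K) (t₀ := 0)
      (fun t _ => (hL t).lipschitzOnWith) ?_ ?_ ?_ ?_ ht
    · constructor <;> linarith [m.cast_nonneg (α := ℝ)]
    · exact fun t ht => ⟨hX m t ht, trivial⟩
    · exact fun t ht => ⟨hX n t ⟨by linarith [ht.1], by linarith [ht.2]⟩, trivial⟩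
    · rw [hX0, hX0]
  refine ⟨fun t => X ⌈|t|⌉₊ t, by simp [hX0], fun t => ?_⟩
  set N := ⌈|t|⌉₊ + 1 with hN
  have hceil := Nat.le_ceil |t|
  have htN : t ∈ Ioo (-(N:ℝ)) (N:ℝ) := by
    have : |t| < N := by rw [hN]; push_cast; linarith
    exact abs_lt.1 this
  have hev : (fun t => X ⌈|t|⌉₊ t) =ᶠ[𝓝 t] X N := by
    filter_upwards [Ioo_mem_nhds htN.1 htN.2] with s hs
    refine agree _ _ ?_ s ?_
    · rw [Nat.ceil_le]; exact (abs_lt.2 hs).le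
    · exact abs_lt.1 (by linarith [Nat.le_ceil |s|])
  have h1 := hX N t ⟨by linarith [htN.1], by linarith [htN.2]⟩
  have h2 := h1.congr_of_eventuallyEq hev
  have e : X ⌈|t|⌉₊ t = X N t := hev.eq_of_nhds
  show HasDerivAt _ (F t (X ⌈|t|⌉₊ t)) t
  rw [e]
  exact h2

/-! ### Algebra of the vector field -/

lemma sp_eq (ω x a : ℝ) : spiralL ω x a =
    √(a ^ 2 + x ^ 2) ^ 2 * (√(a ^ 2 + x ^ 2) - ω) - 2 * a ^ 3 * x - a * x ^ 3 := by
  have h : 0 ≤ a ^ 2 + x ^ 2 := by positivity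
  have e : (a ^ 2 + x ^ 2) ^ ((3 : ℝ) / 2) = √(a ^ 2 + x ^ 2) ^ 3 := by
    rw [Real.sqrt_eq_rpow, ← Real.rpow_natCast _ 3, ← Real.rpow_mul h]
    norm_num
  unfold spiralL
  rw [e]
  have := Real.sq_sqrt h
  set s := √(a ^ 2 + x ^ 2)
  rw [← this]; ring

lemma sp_s (x a : ℝ) : ∃ s, 0 ≤ s ∧ s ^ 2 = a ^ 2 + x ^ 2 ∧ |x| ≤ s ∧ |a| ≤ s ∧
    ∀ ω, spiralL ω x a = s ^ 2 * (s - ω) - 2 * a ^ 3 * x - a * x ^ 3 := by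
  have h : 0 ≤ a ^ 2 + x ^ 2 := by positivity
  refine ⟨√(a ^ 2 + x ^ 2), Real.sqrt_nonneg _, Real.sq_sqrt h, ?_, ?_, fun ω => sp_eq ω x a⟩
  · exact Real.abs_le_sqrt (by nlinarith [sq_nonneg a])
  · exact Real.abs_le_sqrt (by nlinarith [sq_nonneg x])

lemma sp_lip {R ω x y a : ℝ} (hω : |ω| ≤ R) (hx : |x| ≤ R) (hy : |y| ≤ R) (ha : |a| ≤ R) :
    |spiralL ω x a - spiralL ω y a| ≤ (12 * R ^ 2 + 2 * R * R + 5 * R ^ 3) * |x - y| := by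
  have hR : 0 ≤ R := (abs_nonneg _).trans hω
  obtain ⟨s, hs0, hs2, hxs, has, hs⟩ := sp_s x a
  obtain ⟨r, hr0, hr2, hyr, har, hr⟩ := sp_s y a
  rw [hs, hr]
  have hx2 : x ^ 2 ≤ R ^ 2 := sq_le_sq' (abs_le.1 hx).1 (abs_le.1 hx).2
  have hy2 : y ^ 2 ≤ R ^ 2 := sq_le_sq' (abs_le.1 hy).1 (abs_le.1 hy).2
  have ha2 : a ^ 2 ≤ R ^ 2 := sq_le_sq' (abs_le.1 ha).1 (abs_le.1 ha).2
  have hsR : s ≤ 2 * R := by nlinarith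
  have hrR : r ≤ 2 * R := by nlinarith
  have hcs : a ^ 2 + x * y ≤ s * r := by
    refine le_of_abs_le (abs_le_of_sq_le_sq ?_ (by positivity))
    rw [mul_pow, hs2, hr2]; nlinarith [sq_nonneg (a * (x - y))]
  have hsr : |s - r| ≤ |x - y| := sq_le_sq.1 (by nlinarith)
  have e : s ^ 2 * (s - ω) - 2 * a ^ 3 * x - a * x ^ 3 -
      (r ^ 2 * (r - ω) - 2 * a ^ 3 * y - a * y ^ 3) =
      (s - r) * (s ^ 2 + s * r + r ^ 2) - ω * (x + y) * (x - y) - 2 * a ^ 3 * (x - y)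
      - a * (x ^ 2 + x * y + y ^ 2) * (x - y) := by
    linear_combination (-ω) * hs2 + ω * hr2
  rw [e]
  have h1 : |(s - r) * (s ^ 2 + s * r + r ^ 2)| ≤ 12 * R ^ 2 * |x - y| := by
    rw [abs_mul, abs_of_nonneg (by positivity : 0 ≤ s ^ 2 + s * r + r ^ 2), mul_comm]
    refine mul_le_mul ?_ hsr (abs_nonneg _) (by positivity)
    nlinarith [mul_nonneg hs0 hr0, mul_le_mul hsR hrR hr0 (by positivity)]
  have h2 : |ω * (x + y) * (x - y)| ≤ 2 * R * R * |x - y| := by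
    rw [abs_mul, abs_mul]
    refine mul_le_mul_of_nonneg_right ?_ (abs_nonneg _)
    have := abs_add_le x y
    nlinarith [mul_le_mul hω (this.trans (add_le_add hx hy)) (abs_nonneg _) hR]
  have h3 : |2 * a ^ 3 * (x - y)| ≤ 2 * R ^ 3 * |x - y| := by
    rw [abs_mul, abs_mul, abs_pow]
    refine mul_le_mul_of_nonneg_right ?_ (abs_nonneg _)
    have := pow_le_pow_left₀ (abs_nonneg _) ha 3
    norm_num
    exact this
  have h4 : |a * (x ^ 2 + x * y + y ^ 2) * (x - y)| ≤ 3 * R ^ 3 * |x - y| := by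
    rw [abs_mul, abs_mul]
    refine mul_le_mul_of_nonneg_right ?_ (abs_nonneg _)
    have h5 : |x ^ 2 + x * y + y ^ 2| ≤ 3 * R ^ 2 := by
      rw [abs_le]; constructor <;> nlinarith [sq_nonneg (x - y), sq_nonneg (x + y)]
    nlinarith [mul_le_mul ha h5 (abs_nonneg _) hR]
  rw [abs_le] at h1 h2 h3 h4 ⊢
  constructor <;> linarith

lemma sp_zero {ω a : ℝ} (ha : 0 ≤ a) : spiralL ω 0 a = a ^ 2 * (a - ω) := by
  rw [sp_eq]; simp [Real.sqrt_sq ha]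

lemma sp_omega (ω ω' x a : ℝ) :
    spiralL ω x a = spiralL ω' x a + (ω' - ω) * (a ^ 2 + x ^ 2) := by
  unfold spiralL; ring

/-- lower bound -/
lemma sp_lower {ω x a : ℝ} (hx : 0 ≤ x) (ha : 0 ≤ a) : ∃ s, 0 ≤ s ∧ a ≤ s ∧ x ≤ s ∧ s ≤ a + x ∧
    s ^ 2 * (s - ω - 2 * a * x) ≤ spiralL ω x a ∧ spiralL ω x a ≤ s ^ 2 * (s - ω) ∧
    s ^ 2 = a ^ 2 + x ^ 2 ∧ 
    spiralL ω x a = s ^ 2 * (s - ω - a * x) - a ^ 3 * x := by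
  obtain ⟨s, hs0, hs2, hxs, has, hs⟩ := sp_s x a
  rw [abs_of_nonneg hx] at hxs
  rw [abs_of_nonneg ha] at has
  refine ⟨s, hs0, has, hxs, ?_, ?_, ?_, hs2, ?_⟩
  · nlinarith [mul_nonneg hx ha]
  · rw [hs]
    have : 0 ≤ a * x ^ 3 := by positivity
    have e : s ^ 2 * (2 * a * x) = 2 * a ^ 3 * x + 2 * a * x ^ 3 := by rw [hs2]; ring
    linarith
  · rw [hs]
    have : 0 ≤ a * x ^ 3 := by positivity
    have : 0 ≤ a ^ 3 * x := by positivity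
    linarith
  · rw [hs]; linear_combination (a*x)*hs2

lemma sp_barrier_one {ω a : ℝ} (hω : 0 ≤ ω) (ha : 19 / 20 ≤ a) : spiralL ω 1 a < 0 := by
  obtain ⟨s, hs0, has, hxs, -, -, -, hs2, hs⟩ := sp_lower (ω := ω) zero_le_one (by linarith : 0 ≤ a)
  rw [hs]
  have key : s ^ 3 < a * (s ^ 2 + a ^ 2) := by
    have hb : 361 / 400 ≤ a ^ 2 := by nlinarith
    refine lt_of_pow_lt_pow_left₀ 2 (by positivity) ?_
    have e1 : (s ^ 3) ^ 2 = (a ^ 2 + 1) ^ 3 := by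
      rw [← pow_mul, pow_mul' , hs2]; ring
    rw [e1, hs2, mul_pow]
    generalize a ^ 2 = b at hb ⊢
    nlinarith [mul_nonneg (sub_nonneg.2 hb) (sub_nonneg.2 hb),
      mul_nonneg (mul_nonneg (sub_nonneg.2 hb) (sub_nonneg.2 hb)) (sub_nonneg.2 hb)]
  have : 0 ≤ s ^ 2 * ω := by positivity
  nlinarith

lemma sp_trap {ω x a : ℝ} (hω : 0 ≤ ω) (ha0 : 0 < a) (ha : a ≤ 19 / 20) (hx : 20 * ω + 20 ≤ x) :
    0 < spiralL ω x a := by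
  have hx0 : 0 < x := by linarith
  obtain ⟨s, hs0, has, hxs, -, -, -, hs2, hs⟩ := sp_lower (ω := ω) hx0.le ha0.le
  rw [hs]
  have h1 : a * x ≤ 19 / 20 * s := by nlinarith
  have h2 : a ^ 3 * x ≤ s ^ 2 / 2 := by
    have h3 : a * x ≤ s ^ 2 / 2 := by nlinarith [sq_nonneg (a - x)]
    have h4 : a ^ 2 ≤ 1 := by nlinarith
    nlinarith [mul_pos ha0 hx0]
  have h5 : 0 < s ^ 2 := by nlinarith
  have h6 : 1 / 2 < s - ω - a * x := by nlinarith
  nlinarith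

/-! ### The explicit `α` -/

noncomputable def spA (p t : ℝ) : ℝ := (p + 3 * t) ^ (-(1 / 3) : ℝ)

lemma spA_pos {p t : ℝ} (hp : 0 < p) (ht : 0 ≤ t) : 0 < spA p t :=
  Real.rpow_pos_of_pos (by linarith) _

lemma spA_deriv {p t : ℝ} (hp : 0 < p) (ht : 0 ≤ t) :
    HasDerivAt (spA p) (-(spA p t) ^ 4) t := by
  have h0 : 0 < p + 3 * t := by linarith
  have h1 : HasDerivAt (fun t => p + 3 * t) 3 t := by
    simpa using ((hasDerivAt_id t).const_mul 3).const_add p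
  have h2 := h1.rpow_const (p := -(1 / 3)) (Or.inl h0.ne')
  have e : -(spA p t) ^ 4 = 3 * -(1 / 3) * (p + 3 * t) ^ (-(1 / 3) - 1 : ℝ) := by
    unfold spA
    rw [← Real.rpow_natCast, ← Real.rpow_mul h0.le]
    norm_num
  rw [e]
  exact h2

lemma spA_anti {p : ℝ} (hp : 0 < p) {t u : ℝ} (ht : 0 ≤ t) (h : t ≤ u) : spA p u ≤ spA p t := by
  unfold spA
  exact Real.rpow_le_rpow_of_nonpos (by linarith) (by linarith) (by norm_num)

lemma spA_shift (p σ t : ℝ) : spA p (t + σ) = spA (p + 3 * σ) t := by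
  unfold spA; congr 1; ring

lemma spA_tendsto (p : ℝ) : Tendsto (spA p) atTop (𝓝 0) := by
  unfold spA
  refine (tendsto_rpow_neg_atTop (by norm_num : (0:ℝ) < 1 / 3)).comp ?_
  exact tendsto_atTop_add_const_left _ _ (tendsto_id.const_mul_atTop (by norm_num))

lemma spA_zero {c : ℝ} (hc : 0 < c) : spA ((c ^ 3)⁻¹) 0 = c := by
  unfold spA
  rw [mul_zero, add_zero, Real.rpow_neg (by positivity), Real.inv_rpow (by positivity), inv_inv,
    ← Real.rpow_natCast, ← Real.rpow_mul hc.le]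
  norm_num

lemma spA_log {p t : ℝ} (hp : 0 < p) (ht : 0 ≤ t) :
    HasDerivAt (fun t => Real.log (spA p t)) (-(spA p t) ^ 3) t := by
  have h := (spA_deriv hp ht).log (spA_pos hp ht).ne'
  convert h using 1
  have := (spA_pos hp ht).ne'
  field_simp

lemma spA_log_tendsto {p : ℝ} (hp : 0 < p) :
    Tendsto (fun t => Real.log (spA p t)) atTop atBot := by
  refine Real.tendsto_log_nhdsGT_zero.comp ?_
  rw [tendsto_nhdsWithin_iff]
  exact ⟨spA_tendsto p, (eventually_ge_atTop 0).mono fun t ht => spA_pos hp ht⟩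

lemma spA_cont {p : ℝ} (hp : 0 < p) : Continuous (fun t => spA p (max t 0)) := by
  unfold spA
  refine Continuous.rpow_const (by fun_prop) fun t => Or.inl ?_
  have := le_max_right t 0
  linarith

lemma spA_unique {p : ℝ} (hp : 0 < p) {α : ℝ → ℝ} (h0 : α 0 = spA p 0)
    (h : ∀ τ ≥ (0 : ℝ), HasDerivAt α (spiralA (α τ)) τ) : ∀ t ≥ (0:ℝ), α t = spA p t := by
  intro t ht
  obtain ⟨R, hR0, hR⟩ := sp_bdd h t
  obtain ⟨S, hS0, hS⟩ := sp_bdd (fun s (hs : s ≥ 0) => spA_deriv hp hs) t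
  have hd : ∀ s ≥ (0:ℝ), HasDerivAt (fun s => α s - spA p s) (spiralA (α s) + spA p s ^ 4) s := by
    intro s hs
    have e : spiralA (α s) + spA p s ^ 4 = spiralA (α s) - -(spA p s) ^ 4 := by ring
    rw [e]
    exact (h s hs).sub (spA_deriv hp hs)
  have hk : ∀ s ≥ (0:ℝ), s ≤ t → |spiralA (α s) + spA p s ^ 4| ≤
      ((R + S) * (R ^ 2 + S ^ 2)) * |α s - spA p s| := by
    intro s hs hst
    have e : spiralA (α s) + spA p s ^ 4 =
      -(((α s + spA p s) * (α s ^ 2 + spA p s ^ 2)) * (α s - spA p s)) := by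
      unfold spiralA; ring
    rw [e, abs_neg, abs_mul, abs_mul]
    have h1 := hR s hs hst
    have h2 := hS s hs hst
    gcongr
    · exact (abs_add_le _ _).trans (add_le_add h1 h2)
    · rw [abs_of_nonneg (by positivity)]
      exact add_le_add (sq_le_sq' (abs_le.1 h1).1 (abs_le.1 h1).2)
        (sq_le_sq' (abs_le.1 h2).1 (abs_le.1 h2).2)
  have a1 := sp_nonneg hd (by simp [h0]) (T := t) (K := (R + S) * (R ^ 2 + S ^ 2)) (by
    intro s hs hst hneg
    have := (abs_le.1 (hk s hs hst)).1
    rw [abs_of_neg hneg] at this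
    linarith) t ht le_rfl
  have a2 := sp_nonneg (fun s hs => (hd s hs).neg) (by simp [h0]) (T := t)
      (K := (R + S) * (R ^ 2 + S ^ 2)) (by
    intro s hs hst hneg
    have hneg : -(α s - spA p s) < 0 := hneg
    have := (abs_le.1 (hk s hs hst)).2
    rw [abs_of_pos (by linarith)] at this
    show _ * -(α s - spA p s) ≤ _
    linarith) t ht le_rfl
  have a1 : 0 ≤ α t - spA p t := a1
  have a2 : 0 ≤ -(α t - spA p t) := a2
  linarith

/-! ### Uniqueness and monotonicity -/

def SpSol (p ω : ℝ) (x : ℝ → ℝ) : Prop :=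
  ∀ t ≥ (0:ℝ), HasDerivAt x (spiralL ω (x t) (spA p t)) t

lemma sp_lip_sol {p ω₁ ω₂ : ℝ} (hp : 0 < p) {x y : ℝ → ℝ} (hx : SpSol p ω₁ x)
    (hy : SpSol p ω₂ y) (ω T : ℝ) : ∃ K, 0 ≤ K ∧ ∀ t ≥ (0:ℝ), t ≤ T →
      |spiralL ω (x t) (spA p t) - spiralL ω (y t) (spA p t)| ≤ K * |x t - y t| := by
  obtain ⟨R, hR0, hR⟩ := sp_bdd hx T
  obtain ⟨S, hS0, hS⟩ := sp_bdd hy T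
  obtain ⟨Q, hQ0, hQ⟩ := sp_bdd (fun s (hs : s ≥ 0) => spA_deriv hp hs) T
  have hω := abs_nonneg ω
  refine ⟨_, ?_, fun t ht htT => sp_lip (R := R + S + Q + |ω|) ?_ ?_ ?_ ?_⟩
  · positivity
  · linarith
  · linarith [hR t ht htT]
  · linarith [hS t ht htT]
  · linarith [hQ t ht htT]

lemma sp_lip_zero {p ω₁ : ℝ} (hp : 0 < p) {x : ℝ → ℝ} (hx : SpSol p ω₁ x)
    (ω T : ℝ) : ∃ K, 0 ≤ K ∧ ∀ t ≥ (0:ℝ), t ≤ T →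
      |spiralL ω (x t) (spA p t) - spiralL ω 0 (spA p t)| ≤ K * |x t| := by
  obtain ⟨R, hR0, hR⟩ := sp_bdd hx T
  obtain ⟨Q, hQ0, hQ⟩ := sp_bdd (fun s (hs : s ≥ 0) => spA_deriv hp hs) T
  have hω := abs_nonneg ω
  refine ⟨12 * (R + Q + |ω|) ^ 2 + 2 * (R + Q + |ω|) * (R + Q + |ω|) + 5 * (R + Q + |ω|) ^ 3,
    ?_, fun t ht htT => ?_⟩
  · positivity
  · have := sp_lip (R := R + Q + |ω|) (ω := ω) (x := x t) (y := 0) (a := spA p t) ?_ ?_ ?_ ?_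
    · rw [sub_zero] at this; exact this
    · linarith
    · linarith [hR t ht htT]
    · simp; positivity
    · linarith [hQ t ht htT]

lemma sp_compare {p ω₁ ω₂ : ℝ} (hp : 0 < p) {x y : ℝ → ℝ} (hx : SpSol p ω₁ x)
    (hy : SpSol p ω₂ y) (hω : ω₂ ≤ ω₁) (h0 : x 0 ≤ y 0) : ∀ t ≥ (0:ℝ), x t ≤ y t := by
  intro t ht
  obtain ⟨K, hK0, hK⟩ := sp_lip_sol hp hx hy ω₁ t
  have := sp_nonneg (d := fun t => y t - x t) (fun s hs => (hy s hs).sub (hx s hs))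
    (sub_nonneg.2 h0) (T := t) (K := K) (by
      intro s hs hst hneg
      have h1 := (abs_le.1 (hK s hs hst)).2
      have hneg : y s - x s < 0 := hneg
      rw [abs_of_pos (by linarith)] at h1
      have h2 := sp_omega ω₂ ω₁ (y s) (spA p s)
      have h3 : 0 ≤ (ω₁ - ω₂) * (spA p s ^ 2 + y s ^ 2) :=
        mul_nonneg (by linarith) (by positivity)
      show K * (y s - x s) ≤ _
      linarith) t ht le_rfl
  exact sub_nonneg.1 this

lemma sp_lt_compare {p ω : ℝ} (hp : 0 < p) {x y : ℝ → ℝ} (hx : SpSol p ω x)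
    (hy : SpSol p ω y) (h0 : x 0 < y 0) : ∀ t ≥ (0:ℝ), x t < y t := by
  intro t ht
  obtain ⟨K, hK0, hK⟩ := sp_lip_sol hp hx hy ω t
  have := sp_pos (d := fun t => y t - x t) (fun s hs => (hy s hs).sub (hx s hs))
    (sub_pos.2 h0) (T := t) (K := K) (by
      intro s hs hst hpos
      have h1 := (abs_le.1 (hK s hs hst)).2
      have hpos : 0 < y s - x s := hpos
      rw [abs_of_neg (by linarith)] at h1
      show -K * (y s - x s) ≤ _
      linarith) t ht le_rfl
  exact sub_pos.1 this

lemma sp_no_two {p ω : ℝ} (hp : 0 < p) (hω : 0 < ω) {x y : ℝ → ℝ} (hx : SpSol p ω x)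
    (hy : SpSol p ω y) (h0 : x 0 < y 0) (hxl : Tendsto x atTop (𝓝 ω))
    (hyl : Tendsto y atTop (𝓝 ω)) : False := by
  have hlt := sp_lt_compare hp hx hy h0
  have hal := spA_tendsto p
  set r := fun t => √(spA p t ^ 2 + x t ^ 2) with hr
  set s := fun t => √(spA p t ^ 2 + y t ^ 2) with hs
  have hrl : Tendsto r atTop (𝓝 ω) := by
    have := ((hal.pow 2).add (hxl.pow 2)).sqrt
    simpa [Real.sqrt_sq hω.le] using this
  have hsl : Tendsto s atTop (𝓝 ω) := by
    have := ((hal.pow 2).add (hyl.pow 2)).sqrt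
    simpa [Real.sqrt_sq hω.le] using this
  set Q := fun t => (y t + x t) / (s t + r t) *
    (s t ^ 2 + s t * r t + r t ^ 2 - ω * (s t + r t)) - 2 * spA p t ^ 3
      - spA p t * (y t ^ 2 + y t * x t + x t ^ 2) with hQ
  have hQl : Tendsto Q atTop (𝓝 ((ω + ω) / (ω + ω) * (ω ^ 2 + ω * ω + ω ^ 2 - ω * (ω + ω))
      - 2 * 0 ^ 3 - 0 * (ω ^ 2 + ω * ω + ω ^ 2))) := by
    refine Tendsto.sub (Tendsto.sub (Tendsto.mul (Tendsto.div (hyl.add hxl) (hsl.add hrl)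
      (by positivity)) ?_) ((hal.pow 3).const_mul 2)) (hal.mul ?_)
    · exact (((hsl.pow 2).add (hsl.mul hrl)).add (hrl.pow 2)).sub ((hsl.add hrl).const_mul ω)
    · exact ((hyl.pow 2).add (hyl.mul hxl)).add (hxl.pow 2)
  have hlim : (ω + ω) / (ω + ω) * (ω ^ 2 + ω * ω + ω ^ 2 - ω * (ω + ω))
      - 2 * 0 ^ 3 - 0 * (ω ^ 2 + ω * ω + ω ^ 2) = ω ^ 2 := by
    field_simp; ring
  rw [hlim] at hQl
  have hev := hQl.eventually (lt_mem_nhds (by positivity : 0 < ω ^ 2))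
  obtain ⟨T, hT⟩ := eventually_atTop.1 (hev.and (eventually_ge_atTop 0))
  have hT0 : 0 ≤ T := (hT T le_rfl).2
  have hd : ∀ t ≥ T, 0 ≤ spiralL ω (y t) (spA p t) - spiralL ω (x t) (spA p t) := by
    intro t ht
    obtain ⟨hq, ht0⟩ := hT t ht
    have ha := spA_pos hp ht0
    have hr2 : r t ^ 2 = spA p t ^ 2 + x t ^ 2 := Real.sq_sqrt (by positivity)
    have hs2 : s t ^ 2 = spA p t ^ 2 + y t ^ 2 := Real.sq_sqrt (by positivity)
    have hrp : 0 < r t := Real.sqrt_pos.2 (by positivity)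
    have hsp : 0 < s t := Real.sqrt_pos.2 (by positivity)
    have e1 : (s t - r t) = (y t - x t) * ((y t + x t) / (s t + r t)) := by
      field_simp; linear_combination hs2 - hr2
    have e : spiralL ω (y t) (spA p t) - spiralL ω (x t) (spA p t) = (y t - x t) * Q t := by
      rw [sp_eq, sp_eq]
      show s t ^ 2 * (s t - ω) - 2 * spA p t ^ 3 * y t - spA p t * y t ^ 3 -
        (r t ^ 2 * (r t - ω) - 2 * spA p t ^ 3 * x t - spA p t * x t ^ 3) = _
      simp only [hQ]
      linear_combination (s t ^ 2 + s t * r t + r t ^ 2 - ω * (s t + r t)) * e1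
    rw [e]
    exact mul_nonneg (by linarith [hlt t ht0]) hq.le
  have hmono : ∀ t ≥ T, y T - x T ≤ y t - x t := by
    intro t ht
    have := sp_nonneg (d := fun t => (y t - x t) - (y T - x T)) (t₀ := T) (T := t) (K := 0)
      (fun u hu => ((hy u (hT0.trans hu)).sub (hx u (hT0.trans hu))).sub_const _) (by simp)
      (fun u hu _ _ => by simpa using hd u hu) t ht le_rfl
    exact sub_nonneg.1 this
  have hl : Tendsto (fun t => y t - x t) atTop (𝓝 0) := by simpa using hyl.sub hxl
  have := ge_of_tendsto hl ((eventually_ge_atTop T).mono hmono)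
  linarith [hlt T hT0]

lemma sp_lt_start {p ω : ℝ} (hp : 0 < p) (hω : 0 < ω) {x : ℝ → ℝ} (hx : SpSol p ω x)
    (h0 : x 0 = 0) (hxl : Tendsto x atTop (𝓝 ω)) : ω < spA p 0 := by
  by_contra hcon
  push Not at hcon
  have : ∀ t ≥ (0:ℝ), x t ≤ 0 := by
    intro t ht
    obtain ⟨K, hK0, hK⟩ := sp_lip_zero hp hx ω t
    have := sp_nonneg (d := fun t => - x t) (fun s hs => (hx s hs).neg)
      (by simp [h0]) (T := t) (K := K) (by
      intro s hs hst hneg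
      have h1 := (abs_le.1 (hK s hs hst)).2
      have hneg : - x s < 0 := hneg
      rw [abs_of_pos (by linarith), sp_zero (spA_pos hp hs).le] at h1
      have h2 : spA p s ^ 2 * (spA p s - ω) ≤ 0 :=
        mul_nonpos_of_nonneg_of_nonpos (by positivity) (by linarith [spA_anti hp le_rfl hs])
      show K * (- x s) ≤ _
      linarith) t ht le_rfl
    linarith
  have := le_of_tendsto hxl ((eventually_ge_atTop 0).mono this)
  linarith

lemma sp_start_pos {p ω σ : ℝ} (hp : 0 < p) (hσ : 0 < σ) {x : ℝ → ℝ} (hx : SpSol p ω x)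
    (h0 : x 0 = 0) (hω : ω < spA p σ) : 0 < x σ := by
  obtain ⟨K, hK0, hK⟩ := sp_lip_zero hp hx ω σ
  have ha := spA_pos hp hσ.le
  set c := spA p σ ^ 2 * (spA p σ - ω) with hc
  have hc0 : 0 < c := mul_pos (by positivity) (by linarith)
  set δ := c / (2 * (K * σ + 1)) with hδ
  have hKσ : 0 ≤ K * σ := by positivity
  have hδ0 : 0 < δ := by positivity
  have hδe : δ * (K * σ + 1) = c / 2 := by rw [hδ]; field_simp
  have := sp_fence (x := fun t => δ * t) (x' := fun _ => δ) (B := x)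
    (B' := fun t => spiralL ω (x t) (spA p t)) (t₀ := 0) (T := σ)
    (fun s _ => by simpa using (hasDerivAt_id s).const_mul δ) hx (by simp [h0]) (by
      intro s hs hst heq
      have heq : δ * s = x s := heq
      have h1 := (abs_le.1 (hK s hs hst.le)).1
      have hanti := spA_anti hp hs hst.le
      rw [← heq, abs_of_nonneg (by positivity), sp_zero (spA_pos hp hs).le] at h1
      have h2 : c ≤ spA p s ^ 2 * (spA p s - ω) := by
        rw [hc]
        refine mul_le_mul (pow_le_pow_left₀ ha.le hanti 2) (by linarith) (by linarith)
          (by positivity)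
      have h3 : K * (δ * s) ≤ δ * (K * σ) := by
        have : K * δ * s ≤ K * δ * σ := by gcongr
        linarith
      show δ < spiralL ω (x s) (spA p s)
      rw [← heq]
      nlinarith) σ hσ.le le_rfl
  have h : δ * σ ≤ x σ := this
  have : 0 < δ * σ := by positivity
  linarith

lemma sp_connects_sol {c ω : ℝ} (hc : 0 < c) (h : ShootingConnects c ω) :
    ∃ x, x 0 = 0 ∧ SpSol ((c ^ 3)⁻¹) ω x ∧ Tendsto x atTop (𝓝 ω) := by
  obtain ⟨x, α, h0, hα0, hx, hα, hl⟩ := h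
  have hu := spA_unique (p := (c ^ 3)⁻¹) (by positivity) (by rw [hα0, spA_zero hc]) hα
  exact ⟨x, h0, fun t ht => by rw [← hu t ht]; exact hx t ht, hl⟩

lemma sp_unique {c ω₁ ω₂ : ℝ} (hc : 0 < c) (h₁ : ShootingConnects c ω₁)
    (h₂ : ShootingConnects c ω₂) : ω₁ ≤ ω₂ := by
  by_contra hcon
  push Not at hcon
  obtain ⟨x, hx0, hx, hxl⟩ := sp_connects_sol hc h₁
  obtain ⟨y, hy0, hy, hyl⟩ := sp_connects_sol hc h₂
  have := sp_compare (by positivity) hx hy hcon.le (by rw [hx0, hy0])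
  have := le_of_tendsto_of_tendsto hxl hyl ((eventually_ge_atTop 0).mono this)
  linarith

lemma sp_mono {c₁ c₂ ω₁ ω₂ : ℝ} (hc₁ : 0 < c₁) (hc : c₁ < c₂) (hω₁ : 0 < ω₁)
    (h₁ : ShootingConnects c₁ ω₁) (h₂ : ShootingConnects c₂ ω₂) : ω₁ < ω₂ := by
  by_contra hcon
  push Not at hcon
  have hc₂ : 0 < c₂ := hc₁.trans hc
  obtain ⟨x, hx0, hx, hxl⟩ := sp_connects_sol hc₁ h₁
  obtain ⟨y, hy0, hy, hyl⟩ := sp_connects_sol hc₂ h₂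
  have hp₁ : 0 < (c₁ ^ 3)⁻¹ := by positivity
  have hp₂ : 0 < (c₂ ^ 3)⁻¹ := by positivity
  have hs := sp_lt_start hp₁ hω₁ hx hx0 hxl
  have hpp : (c₂ ^ 3)⁻¹ < (c₁ ^ 3)⁻¹ := by gcongr
  generalize (c₁ ^ 3)⁻¹ = p at *
  generalize (c₂ ^ 3)⁻¹ = q at *
  set σ := (p - q) / 3 with hσ
  have hσ0 : 0 < σ := by rw [hσ]; linarith
  have hpq : q + 3 * σ = p := by rw [hσ]; ring
  have hsh : ∀ t, spA q (t + σ) = spA p t := fun t => by rw [spA_shift, hpq]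
  have hyσ : 0 < y σ := by
    refine sp_start_pos hp₂ hσ0 hy hy0 ?_
    have := hsh 0
    rw [zero_add] at this
    rw [this]; linarith
  set z := fun t => y (t + σ) with hz
  have hzs : SpSol p ω₂ z := by
    intro t ht
    have := (hy (t + σ) (by linarith)).comp_add_const t σ
    rw [hsh] at this
    exact this
  have hzl : Tendsto z atTop (𝓝 ω₂) := hyl.comp (tendsto_atTop_add_const_right _ _ tendsto_id)
  have hz0 : x 0 < z 0 := by simp only [hz, zero_add, hx0, hyσ]
  have hle := sp_compare hp₁ hx hzs hcon hz0.le
  have := le_of_tendsto_of_tendsto hxl hzl ((eventually_ge_atTop 0).mono hle)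
  have he : ω₂ = ω₁ := le_antisymm hcon this
  subst he
  exact sp_no_two hp₁ hω₁ hx hzs hz0 hxl hzl

/-! ### Existence -/

noncomputable def spC (M x : ℝ) : ℝ := max 0 (min x M)

lemma spC_nonneg (M x : ℝ) : 0 ≤ spC M x := le_max_left _ _

lemma spC_le {M : ℝ} (hM : 0 ≤ M) (x : ℝ) : spC M x ≤ M := max_le hM (min_le_right _ _)

lemma spC_of_nonpos {M x : ℝ} (hx : x ≤ 0) : spC M x = 0 :=
  max_eq_left ((min_le_left _ _).trans hx)

lemma spC_of_mem {M x : ℝ} (hx : 0 ≤ x) (hM : x ≤ M) : spC M x = x := by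
  unfold spC; rw [min_eq_left hM, max_eq_right hx]

lemma spC_le_self {M x : ℝ} (hx : 0 ≤ x) : spC M x ≤ x := max_le hx (min_le_left _ _)

lemma spC_lip (M x y : ℝ) : |spC M x - spC M y| ≤ |x - y| := by
  unfold spC
  refine (abs_max_sub_max_le_max _ _ _ _).trans ?_
  refine max_le (by simp) ?_
  refine (abs_min_sub_min_le_max _ _ _ _).trans ?_
  exact max_le le_rfl (by simp)

noncomputable def spF (p M ω t x : ℝ) : ℝ := spiralL ω (spC M x) (spA p (max t 0))

lemma spF_lip {p M : ℝ} (hp : 0 < p) (hM : 0 < M) (ω : ℝ) :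
    ∃ K : NNReal, ∀ t, LipschitzWith K (spF p M ω t) := by
  set R := |ω| + M + spA p 0 with hR
  have h1 := abs_nonneg ω
  have h2 := spA_pos hp le_rfl
  have hR0 : 0 ≤ R := by positivity
  refine ⟨⟨12 * R ^ 2 + 2 * R * R + 5 * R ^ 3, by positivity⟩, fun t => ?_⟩
  refine LipschitzWith.of_dist_le_mul fun x y => ?_
  rw [Real.dist_eq, Real.dist_eq]
  have h3 := spA_pos hp (le_max_right t 0)
  have h4 := spA_anti hp le_rfl (le_max_right t 0)
  refine (sp_lip (R := R) ?_ ?_ ?_ ?_).trans ?_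
  · linarith
  · rw [abs_of_nonneg (spC_nonneg _ _)]; linarith [spC_le hM.le x]
  · rw [abs_of_nonneg (spC_nonneg _ _)]; linarith [spC_le hM.le y]
  · rw [abs_of_pos h3]; linarith
  · exact mul_le_mul_of_nonneg_left (spC_lip M x y) (by positivity)

lemma spL_cont (ω x : ℝ) : Continuous (fun a => spiralL ω x a) := by
  have : (fun a => spiralL ω x a) = fun a => √(a ^ 2 + x ^ 2) ^ 2 * (√(a ^ 2 + x ^ 2) - ω)
      - 2 * a ^ 3 * x - a * x ^ 3 := by
    funext a; exact sp_eq ω x a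
  rw [this]
  fun_prop

lemma sp_trunc {p M : ℝ} (hp : 0 < p) (hM : 0 < M) (ω : ℝ) :
    ∃ x : ℝ → ℝ, x 0 = 0 ∧
      ∀ t ≥ (0:ℝ), HasDerivAt x (spiralL ω (spC M (x t)) (spA p t)) t := by
  obtain ⟨K, hK⟩ := spF_lip hp hM ω
  set a₀ := spA p 0
  have h2 : 0 < a₀ := spA_pos hp le_rfl
  have hC : 0 ≤ K * M + a₀ ^ 2 * (a₀ + |ω|) := by
    have := abs_nonneg ω
    positivity
  obtain ⟨x, hx0, hx⟩ := sp_global (F := spF p M ω) (K := K) (C := ⟨_, hC⟩) hK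
    (fun x => (spL_cont ω (spC M x)).comp (spA_cont hp)) (by
      intro t x
      have h3 := spA_pos hp (le_max_right t 0)
      have h4 := spA_anti hp le_rfl (le_max_right t 0)
      have h5 := (hK t).dist_le_mul (spC M x) 0
      have e1 : spF p M ω t (spC M x) = spF p M ω t x := by
        unfold spF; rw [spC_of_mem (spC_nonneg _ _) (spC_le hM.le x)]
      have e2 : spF p M ω t 0 = spA p (max t 0) ^ 2 * (spA p (max t 0) - ω) := by
        unfold spF; rw [spC_of_nonpos le_rfl, sp_zero h3.le]
      rw [Real.dist_eq, Real.dist_eq, e1, sub_zero, abs_of_nonneg (spC_nonneg _ _)] at h5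
      have h6 : |spF p M ω t 0| ≤ a₀ ^ 2 * (a₀ + |ω|) := by
        rw [e2, abs_mul, abs_of_nonneg (sq_nonneg _)]
        have : |spA p (max t 0) - ω| ≤ a₀ + |ω| := by
          refine (abs_sub _ _).trans ?_
          rw [abs_of_pos h3]; gcongr
        gcongr
      have h7 : K * spC M x ≤ K * M := by
        have := spC_le hM.le x
        gcongr
      have h8 := abs_sub_abs_le_abs_sub (spF p M ω t x) (spF p M ω t 0)
      show _ ≤ K * M + a₀ ^ 2 * (a₀ + |ω|)
      linarith)
  refine ⟨x, hx0, fun t ht => ?_⟩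
  have := hx t
  unfold spF at this
  rwa [max_eq_left ht] at this

lemma sp_param_cont {p M : ℝ} (hp : 0 < p) (hM : 0 < M) {X : ℝ → ℝ → ℝ} (hX0 : ∀ ω, X ω 0 = 0)
    (hX : ∀ ω, ∀ t ≥ (0:ℝ), HasDerivAt (X ω) (spiralL ω (spC M (X ω t)) (spA p t)) t)
    {τ : ℝ} (hτ : 0 ≤ τ) : Continuous (fun ω => X ω τ) := by
  rw [continuous_iff_continuousAt]
  intro ω₀
  obtain ⟨K, hK⟩ := spF_lip hp hM ω₀
  set c := spA p 0 ^ 2 + M ^ 2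
  have key : ∀ ω, dist (X ω τ) (X ω₀ τ) ≤ gronwallBound 0 K (|ω - ω₀| * c + 0) (τ - 0) := by
    intro ω
    refine dist_le_of_approx_trajectories_ODE (a := 0) (b := τ) hK
      (fun s hs => (hX ω s hs.1).continuousAt.continuousWithinAt)
      (fun s hs => (hX ω s hs.1).hasDerivWithinAt) ?_
      (fun s hs => (hX ω₀ s hs.1).continuousAt.continuousWithinAt)
      (fun s hs => (hX ω₀ s hs.1).hasDerivWithinAt) ?_ (by simp [hX0]) τ ⟨hτ, le_rfl⟩
    · intro s hs
      unfold spF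
      rw [max_eq_left hs.1, sp_omega ω ω₀, Real.dist_eq, add_sub_cancel_left, abs_mul,
        abs_sub_comm, abs_of_nonneg (add_nonneg (sq_nonneg (spA p s)) (sq_nonneg _))]
      have h1 := spA_pos hp hs.1
      have h2 := spA_anti hp le_rfl hs.1
      have h3 := spC_nonneg M (X ω s)
      have h4 := spC_le hM.le (X ω s)
      refine mul_le_mul_of_nonneg_left ?_ (abs_nonneg _)
      exact add_le_add (pow_le_pow_left₀ h1.le h2 2) (pow_le_pow_left₀ h3 h4 2)
    · intro s hs
      unfold spF
      rw [max_eq_left hs.1, dist_self]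
  rw [ContinuousAt, tendsto_iff_dist_tendsto_zero]
  have hg : Tendsto (fun ω => gronwallBound 0 K (|ω - ω₀| * c + 0) (τ - 0)) (𝓝 ω₀) (𝓝 0) := by
    have hc : Continuous (fun ω => gronwallBound 0 K (|ω - ω₀| * c + 0) (τ - 0)) :=
      (gronwallBound_continuous_ε 0 K (τ - 0)).comp (by fun_prop)
    have := hc.tendsto ω₀
    simpa [gronwallBound_ε0_δ0] using this
  exact squeeze_zero (fun _ => dist_nonneg) key hg

lemma sp_ge_of_log {p κ b t₀ : ℝ} (hp : 0 < p) (ht₀ : 0 ≤ t₀) (hκ : 0 < κ) {x x' : ℝ → ℝ}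
    (hx : ∀ t ≥ (0:ℝ), HasDerivAt x (x' t) t) (hb : b ≤ x t₀)
    (h : ∀ t ≥ t₀, b ≤ x t → κ * spA p t ^ 3 ≤ x' t) (N : ℝ) : ∃ t ≥ t₀, N < x t := by
  have hf : ∀ t ≥ t₀, b + κ / 2 * (Real.log (spA p t₀) - Real.log (spA p t)) ≤ x t := by
    intro t ht
    refine sp_fence (x := fun t => b + κ / 2 * (Real.log (spA p t₀) - Real.log (spA p t)))
      (x' := fun t => κ / 2 * (spA p t ^ 3)) (B := x) (B' := x') (t₀ := t₀) (T := t)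
      ?_ (fun s hs => hx s (ht₀.trans hs)) (by simpa using hb) ?_ t ht le_rfl
    · intro s hs
      have := (((spA_log hp (ht₀.trans hs)).const_sub (Real.log (spA p t₀))).const_mul
        (κ / 2)).const_add b
      rwa [neg_neg] at this
    · intro s hs _ heq
      have heq : b + κ / 2 * (Real.log (spA p t₀) - Real.log (spA p s)) = x s := heq
      have h1 := Real.log_le_log (spA_pos hp (ht₀.trans hs)) (spA_anti hp ht₀ hs)
      have h2 := spA_pos hp (ht₀.trans hs)
      have h3 : 0 ≤ κ / 2 * (Real.log (spA p t₀) - Real.log (spA p s)) :=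
        mul_nonneg (by positivity) (by linarith)
      have h4 := h s hs (by linarith)
      have h5 : 0 < κ * spA p s ^ 3 := by positivity
      show κ / 2 * (spA p s ^ 3) < x' s
      linarith
  have hl : Tendsto (fun t => b + κ / 2 * (Real.log (spA p t₀) - Real.log (spA p t)))
      atTop atTop := by
    refine tendsto_atTop_add_const_left _ _ (Tendsto.const_mul_atTop (by positivity) ?_)
    have := tendsto_neg_atBot_atTop.comp (spA_log_tendsto hp)
    simpa [sub_eq_add_neg] using tendsto_atTop_add_const_left _ (Real.log (spA p t₀)) this
  obtain ⟨t, h1, h2⟩ := ((hl.eventually_gt_atTop N).and (eventually_ge_atTop t₀)).exists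
  exact ⟨t, h2, lt_of_lt_of_le h1 (hf t h2)⟩

lemma spA_eventually_small (p : ℝ) {ε : ℝ} (hε : 0 < ε) :
    ∃ T ≥ (0:ℝ), ∀ t ≥ T, spA p t < ε := by
  obtain ⟨T, hT⟩ := eventually_atTop.1 ((spA_tendsto p).eventually (gt_mem_nhds hε))
  exact ⟨max T 0, le_max_right _ _, fun t ht => hT t ((le_max_left _ _).trans ht)⟩

lemma sp_converge {p M ω : ℝ} (hp : 0 < p) (hω : 0 < ω) {x : ℝ → ℝ} (hx : SpSol p ω x)
    (h0 : ∀ t ≥ (0:ℝ), 0 ≤ x t) (hM : ∀ t ≥ (0:ℝ), x t ≤ M) : Tendsto x atTop (𝓝 ω) := by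
  have hM0 : 0 ≤ M := (h0 0 le_rfl).trans (hM 0 le_rfl)
  rw [Metric.tendsto_atTop]
  intro ε hε
  obtain ⟨T, hT0, hT⟩ := spA_eventually_small p
    (lt_min (lt_min one_pos (half_pos hε)) (by positivity : 0 < ε / (4 * (M + 1))))
  refine ⟨T, fun t ht => ?_⟩
  have small : ∀ s ≥ T, 0 ≤ s ∧ 0 < spA p s ∧ spA p s < 1 ∧ spA p s < ε / 2 ∧
      2 * spA p s * x s ≤ ε / 2 := by
    intro s hs
    have := hT s hs
    rw [lt_min_iff, lt_min_iff] at this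
    obtain ⟨⟨h1, h2⟩, h3⟩ := this
    have hs0 := hT0.trans hs
    have ha := spA_pos hp hs0
    refine ⟨hs0, ha, h1, h2, ?_⟩
    rw [lt_div_iff₀ (by positivity)] at h3
    have := mul_le_mul_of_nonneg_left (hM s hs0) ha.le
    nlinarith
  have ht0 := hT0.trans ht
  rw [Real.dist_eq, abs_lt]
  constructor
  · by_contra hcon
    push Not at hcon
    obtain ⟨s, hs, hs'⟩ := sp_ge_of_log (κ := ε / 2) (b := -(ω - ε)) hp ht0 (half_pos hε)
      (x := fun t => - x t) (fun s hs => (hx s hs).neg) (by linarith) (by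
        intro s hs hb
        have hb : -(ω - ε) ≤ - x s := hb
        obtain ⟨hs0, ha, ha1, ha2, -⟩ := small s (ht.trans hs)
        obtain ⟨r, hr0, har, hxr, hrs, -, hf, -⟩ := sp_lower (ω := ω) (h0 s hs0) ha.le
        have h1 : r - ω ≤ - (ε / 2) := by linarith
        have h2 : r ^ 2 * (r - ω) ≤ r ^ 2 * (-(ε / 2)) :=
          mul_le_mul_of_nonneg_left h1 (sq_nonneg _)
        have h3 : spA p s ^ 3 ≤ r ^ 2 := by
          have : spA p s ^ 2 ≤ r ^ 2 := pow_le_pow_left₀ ha.le har 2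
          nlinarith [sq_nonneg (spA p s)]
        have h4 := mul_le_mul_of_nonneg_left h3 (half_pos hε).le
        linarith) 0
    have := h0 s (ht0.trans hs)
    have hs' : 0 < - x s := hs'
    linarith
  · by_contra hcon
    push Not at hcon
    obtain ⟨s, hs, hs'⟩ := sp_ge_of_log (κ := ε / 2) (b := ω + ε) hp ht0 (half_pos hε)
      hx (by linarith) (by
        intro s hs hb
        obtain ⟨hs0, ha, ha1, ha2, ha3⟩ := small s (ht.trans hs)
        obtain ⟨r, hr0, har, hxr, hrs, hf, -⟩ := sp_lower (ω := ω) (h0 s hs0) ha.le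
        have h1 : ε / 2 ≤ r - ω - 2 * spA p s * x s := by linarith
        have h2 := mul_le_mul_of_nonneg_left h1 (sq_nonneg r)
        have h3 : spA p s ^ 3 ≤ r ^ 2 := by
          have : spA p s ^ 2 ≤ r ^ 2 := pow_le_pow_left₀ ha.le har 2
          nlinarith [sq_nonneg (spA p s)]
        have h4 := mul_le_mul_of_nonneg_left h3 (half_pos hε).le
        linarith) M
    have := hM s (ht0.trans hs)
    linarith

lemma sp_exists {p : ℝ} (hp : 0 < p) :
    ∃ ω x, 0 < ω ∧ x 0 = 0 ∧ SpSol p ω x ∧ Tendsto x atTop (𝓝 ω) := by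
  set a₀ := spA p 0 with ha₀
  have ha₀p : 0 < a₀ := spA_pos hp le_rfl
  set W := 2 * a₀ with hW
  set M := 20 * W + 20 with hMdef
  have hM : 0 < M := by positivity
  choose X hX0 hX using fun ω => sp_trunc hp hM ω
  have hcont : ∀ τ ≥ (0:ℝ), Continuous (fun ω => X ω τ) :=
    fun τ hτ => sp_param_cont hp hM hX0 hX hτ
  -- (1)
  have c1 : ∀ ω, ∀ t ≥ (0:ℝ), ω ≤ spA p t → 0 ≤ X ω t := by
    intro ω t ht h
    refine sp_nonneg (hX ω) (by rw [hX0]) (T := t) (K := 0) ?_ t ht le_rfl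
    intro s hs hst hneg
    have hA := spA_pos hp hs
    rw [spC_of_nonpos hneg.le, sp_zero hA.le, zero_mul]
    exact mul_nonneg (by positivity) (by linarith [spA_anti hp hs hst])
  -- (2)
  have c2 : ∀ ω, ∀ t₀ ≥ (0:ℝ), spA p t₀ ≤ ω → X ω t₀ ≤ 0 → ∀ t ≥ t₀, X ω t ≤ 0 := by
    intro ω t₀ ht₀ hA hneg t ht
    have := sp_nonneg (d := fun t => - X ω t) (t₀ := t₀) (T := t) (K := (a₀ + M) ^ 2)
      (fun s hs => (hX ω s (ht₀.trans hs)).neg) (by linarith) (by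
        intro s hs hst hd
        have hd : - X ω s < 0 := hd
        have hs0 := ht₀.trans hs
        have hAp := spA_pos hp hs0
        have hCn := spC_nonneg M (X ω s)
        obtain ⟨r, hr0, har, hxr, hrs, -, hf, -⟩ := sp_lower (ω := ω) hCn hAp.le
        have hC1 := spC_le_self (M := M) (x := X ω s) (by linarith)
        have hC2 := spC_le hM.le (X ω s)
        have hA1 := spA_anti hp ht₀ hs
        have hA2 := spA_anti hp le_rfl hs0
        have h1 : r - ω ≤ X ω s := by linarith
        have h2 : r ^ 2 ≤ (a₀ + M) ^ 2 := pow_le_pow_left₀ hr0 (by linarith) 2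
        have h3 : r ^ 2 * (r - ω) ≤ r ^ 2 * X ω s := mul_le_mul_of_nonneg_left h1 (sq_nonneg _)
        have h4 : r ^ 2 * X ω s ≤ (a₀ + M) ^ 2 * X ω s := mul_le_mul_of_nonneg_right h2 (by linarith)
        show (a₀ + M) ^ 2 * (- X ω s) ≤ _
        linarith) t ht le_rfl
    have this : 0 ≤ - X ω t := this
    linarith
  -- (3)
  have c3 : ∀ ω, 0 ≤ ω → ω ≤ W → ∀ t₀ ≥ (0:ℝ), M < X ω t₀ → ∀ t ≥ t₀, M ≤ X ω t := by
    intro ω hω hωW t₀ ht₀ hgt t ht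
    have hA : spA p t₀ < 19 / 20 := by
      by_contra hcon
      push Not at hcon
      have := sp_fence (x := X ω) (B := fun _ => 1) (B' := fun _ => 0) (t₀ := 0) (T := t₀)
        (hX ω) (fun s _ => hasDerivAt_const s 1) (by rw [hX0]; exact zero_le_one) (by
          intro s hs hst heq
          have heq : X ω s = 1 := heq
          rw [heq, spC_of_mem zero_le_one (by linarith)]
          exact sp_barrier_one hω (by linarith [spA_anti hp hs hst.le])) t₀ ht₀ le_rfl
      have this : X ω t₀ ≤ 1 := this
      linarith
    exact sp_fence (x := fun _ => M) (x' := fun _ => 0) (B := X ω) (t₀ := t₀) (T := t)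
      (fun s _ => hasDerivAt_const s M) (fun s hs => hX ω s (ht₀.trans hs)) hgt.le (by
        intro s hs hst heq
        have heq : M = X ω s := heq
        rw [← heq, spC_of_mem hM.le le_rfl]
        exact sp_trap hω (spA_pos hp (ht₀.trans hs)) (by linarith [spA_anti hp ht₀ hs])
          (by linarith)) t ht le_rfl
  -- (4)
  have c4 : ∃ t ≥ (0:ℝ), M < X 0 t := by
    obtain ⟨T, hT0, hT⟩ := spA_eventually_small p (by norm_num : (0:ℝ) < 1 / 4)
    obtain ⟨t, ht, h⟩ := sp_ge_of_log (κ := 1 / 2) (b := X 0 T) hp hT0 (by norm_num) (hX 0) le_rfl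
      (by
        intro s hs _
        have hs0 := hT0.trans hs
        have ha := spA_pos hp hs0
        obtain ⟨r, hr0, har, hxr, hrs, hf, -⟩ :=
          sp_lower (ω := 0) (spC_nonneg M (X 0 s)) ha.le
        have h1 : r / 2 ≤ r - 0 - 2 * spA p s * spC M (X 0 s) := by
          nlinarith [hT s hs, spC_nonneg M (X 0 s)]
        have h2 := mul_le_mul_of_nonneg_left h1 (sq_nonneg r)
        have h3 : spA p s ^ 3 ≤ r ^ 3 := pow_le_pow_left₀ ha.le har 3
        nlinarith) M
    exact ⟨t, hT0.trans ht, h⟩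
  -- (5)
  have c5 : ∃ t ≥ (0:ℝ), X W t < 0 := by
    have hle := c2 W 0 le_rfl (by linarith) (by rw [hX0])
    obtain ⟨t, ht, h⟩ := sp_ge_of_log (κ := 1) (b := 0) (x := fun t => - X W t) hp le_rfl
      one_pos (fun s hs => (hX W s hs).neg) (by simp [hX0])
      (by
        intro s hs _
        have ha := spA_pos hp hs
        rw [spC_of_nonpos (hle s hs), sp_zero ha.le]
        have := spA_anti hp le_rfl hs
        have h2 : spA p s ^ 2 * (spA p s - W) ≤ spA p s ^ 2 * (- spA p s) :=
          mul_le_mul_of_nonneg_left (by linarith) (sq_nonneg _)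
        nlinarith) 0
    have h : 0 < - X W t := h
    exact ⟨t, ht, by linarith⟩
  set U := {ω | ∃ t ≥ (0:ℝ), M < X ω t} with hU
  set V := {ω | ∃ t ≥ (0:ℝ), X ω t < 0} with hV
  have hUo : IsOpen U := by
    have : U = ⋃ t ∈ Ici (0:ℝ), {ω | M < X ω t} := by ext; simp [hU]
    rw [this]
    exact isOpen_biUnion fun t ht => isOpen_lt continuous_const (hcont t ht)
  have hVo : IsOpen V := by
    have : V = ⋃ t ∈ Ici (0:ℝ), {ω | X ω t < 0} := by ext; simp [hV]
    rw [this]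
    exact isOpen_biUnion fun t ht => isOpen_lt (hcont t ht) continuous_const
  have hWp : 0 ≤ W := by positivity
  have hex : ∃ ω ∈ Icc 0 W, ω ∉ U ∪ V := by
    by_contra hcon
    push Not at hcon
    obtain ⟨ω, hω, ⟨t₁, ht₁, h₁⟩, ⟨t₂, ht₂, h₂⟩⟩ := isPreconnected_Icc U V hUo hVo hcon
      ⟨0, ⟨le_rfl, hWp⟩, c4⟩ ⟨W, ⟨hWp, le_rfl⟩, c5⟩
    rcases le_total t₁ t₂ with h | h
    · have := c3 ω hω.1 hω.2 t₁ ht₁ h₁ t₂ h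
      linarith
    · have hA : spA p t₂ ≤ ω := by
        by_contra hc
        push Not at hc
        linarith [c1 ω t₂ ht₂ hc.le]
      have := c2 ω t₂ ht₂ hA h₂.le t₁ h
      linarith
  obtain ⟨ω, hω, hnot⟩ := hex
  rw [mem_union, not_or] at hnot
  obtain ⟨hnU, hnV⟩ := hnot
  have hx1 : ∀ t ≥ (0:ℝ), X ω t ≤ M := fun t ht => by
    by_contra h
    push Not at h
    exact hnU ⟨t, ht, h⟩
  have hx2 : ∀ t ≥ (0:ℝ), 0 ≤ X ω t := fun t ht => by
    by_contra h
    push Not at h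
    exact hnV ⟨t, ht, h⟩
  have hω0 : 0 < ω := by
    rcases hω.1.lt_or_eq with h | h
    · exact h
    · exact absurd (h ▸ c4 : ω ∈ U) hnU
  have hsol : SpSol p ω (X ω) := by
    intro t ht
    have := hX ω t ht
    rwa [spC_of_mem (hx2 t ht) (hx1 t ht)] at this
  exact ⟨ω, X ω, hω0, hX0 ω, hsol, sp_converge hp hω0 hsol hx2 hx1⟩

/-- Existence and uniqueness of the anchored spiral frequency: for every α* > 0 there is a
unique ω* > 0 such that the shooting solution converges to ω*; moreover ω* is strictly
increasing in α*. -/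
theorem anchored_spiral_existence_uniqueness :
    (∀ αstar : ℝ, 0 < αstar → ∃! ω : ℝ, 0 < ω ∧ ShootingConnects αstar ω) ∧
    (∀ α₁ α₂ ω₁ ω₂ : ℝ, 0 < α₁ → α₁ < α₂ →
      0 < ω₁ → ShootingConnects α₁ ω₁ →
      0 < ω₂ → ShootingConnects α₂ ω₂ → ω₁ < ω₂) := by
  refine ⟨fun c hc => ?_, fun c₁ c₂ ω₁ ω₂ hc₁ hc hω₁ h₁ _ h₂ => sp_mono hc₁ hc hω₁ h₁ h₂⟩
  have hp : 0 < (c ^ 3)⁻¹ := by positivity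
  obtain ⟨ω, x, hω, hx0, hx, hxl⟩ := sp_exists hp
  have hcon : ShootingConnects c ω :=
    ⟨x, spA ((c ^ 3)⁻¹), hx0, spA_zero hc, hx, fun t ht => spA_deriv hp ht, hxl⟩
  exact ⟨ω, ⟨hω, hcon⟩, fun ω' h' => le_antisymm (sp_unique hc h'.2 hcon) (sp_unique hc hcon h'.2)⟩
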